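/- arXiv:1901.10837 — 2 statements merged into one kernel-verified Lean document; each statement's English description precedes it below -/
import Mathlib

section
/- Let D1, D0 be probability measures on Z corrupted under the MC model with parameters α, β ∈ (0,1), α + β < 1, giving D1c and D0c. Then for any bounded measurable h: Z → ℝ and any τ > 0: |E_{D0}[h] − E_{D1}[h]| ≤ τ if and only if |E_{D0c}[h] − E_{D1c}[h]| ≤ τ·(1 − α − β). -/
open MeasureTheory

section Contamination

variable {Z E : Type*} [MeasurableSpace Z] [NormedAddCommGroup E] [NormedSpace ℝ E]
  {μ ν : Measure Z} {f : Z → E} {ε α β : ℝ}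

/-- The contamination of `μ` by `ν` at rate `ε ∈ [0, 1]`. In the MC noise model the corrupted
distributions are `contaminate α D1 D0` and `contaminate β D0 D1`. The weights are truncated by
`ENNReal.ofReal` when `ε` lies outside `[0, 1]`. -/
noncomputable def contaminate (ε : ℝ) (μ ν : Measure Z) : Measure Z :=
  ENNReal.ofReal (1 - ε) • μ + ENNReal.ofReal ε • ν

theorem integral_contaminate (hε : ε ∈ Set.Icc 0 1) (hμ : Integrable f μ) (hν : Integrable f ν) :
    ∫ z, f z ∂(contaminate ε μ ν) = (1 - ε) • ∫ z, f z ∂μ + ε • ∫ z, f z ∂ν := by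
  rw [contaminate, integral_add_measure (hμ.smul_measure ENNReal.ofReal_ne_top)
    (hν.smul_measure ENNReal.ofReal_ne_top), integral_smul_measure, integral_smul_measure,
    ENNReal.toReal_ofReal (sub_nonneg.2 hε.2), ENNReal.toReal_ofReal hε.1]

theorem integral_contaminate_sub_integral_contaminate (hα : α ∈ Set.Icc 0 1)
    (hβ : β ∈ Set.Icc 0 1) (hμ : Integrable f μ) (hν : Integrable f ν) :
    ∫ z, f z ∂(contaminate β ν μ) - ∫ z, f z ∂(contaminate α μ ν) =
      (1 - α - β) • (∫ z, f z ∂ν - ∫ z, f z ∂μ) := by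
  rw [integral_contaminate hβ hν hμ, integral_contaminate hα hμ hν]
  module

theorem mc_fairness_tolerance_iff_general [CompleteSpace E] (hα : 0 ≤ α) (hβ : 0 ≤ β)
    (hαβ : α + β < 1) (hμ : Integrable f μ) (hν : Integrable f ν) (τ : ℝ) :
    ‖∫ z, f z ∂ν - ∫ z, f z ∂μ‖ ≤ τ ↔
      ‖∫ z, f z ∂(contaminate β ν μ) - ∫ z, f z ∂(contaminate α μ ν)‖ ≤ τ * (1 - α - β) := by
  have hpos : 0 < 1 - α - β := by linarith
  rw [integral_contaminate_sub_integral_contaminate ⟨hα, by linarith⟩ ⟨hβ, by linarith⟩ hμ hν,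
    norm_smul_of_nonneg hpos.le, mul_comm τ, mul_le_mul_iff_right₀ hpos]

end Contamination

/-- fairness tolerance equivalence under MC noise (Theorem 1, DP case). -/
theorem mc_fairness_tolerance_iff
    {Z : Type*} [MeasurableSpace Z]
    (D1 D0 : Measure Z) [IsProbabilityMeasure D1] [IsProbabilityMeasure D0]
    (α β : ℝ) (hα : α ∈ Set.Ioo (0:ℝ) 1) (hβ : β ∈ Set.Ioo (0:ℝ) 1)
    (hαβ : α + β < 1)
    (D1c D0c : Measure Z)
    (hD1c : D1c = ENNReal.ofReal (1 - α) • D1 + ENNReal.ofReal α • D0)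
    (hD0c : D0c = ENNReal.ofReal β • D1 + ENNReal.ofReal (1 - β) • D0)
    (h : Z → ℝ) (hmeas : Measurable h) (C : ℝ) (hbound : ∀ z, |h z| ≤ C)
    (τ : ℝ) (hτ : 0 < τ) :
    |(∫ z, h z ∂D0) - (∫ z, h z ∂D1)| ≤ τ ↔
      |(∫ z, h z ∂D0c) - (∫ z, h z ∂D1c)| ≤ τ * (1 - α - β) := by
  rw [hD1c, hD0c, add_comm (ENNReal.ofReal β • D1)]
  exact mc_fairness_tolerance_iff_general hα.1.le hβ.1.le hαβ
    (.of_bound hmeas.aestronglyMeasurable C (.of_forall hbound))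
    (.of_bound hmeas.aestronglyMeasurable C (.of_forall hbound)) τ
end

section
/- Suppose the group base rates are preserved under corruption, i.e., max(P_D[A=0], P_D[A=1]) = max(P_{Dcorr}[A=0], P_{Dcorr}[A=1]) = M, and MC noise with parameters α, β ∈ (0,1), α+β<1 acts on the sensitive attribute. Then for any bounded c and τ > 0: max_a |E_D[c(X)|A=a] − E_D[c(X)]| < τ if and only if max_a |E_{Dcorr}[c(X)|A=a] − E_{Dcorr}[c(X)]| < τ·(1−α−β). -/
open MeasureTheory ProbabilityTheory

/-!
By the law of total expectation, the mean on an event deviates from the overall mean by the gap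
between the two group means times the mass of the opposite group, so the largest deviation is the
gap times the larger base rate. Mutual contamination replaces each group law by a mixture of the
two, which scales the gap by `1 - α - β > 0`; with equal larger base rates, the largest deviation
is therefore scaled by the same factor.
-/

section ConditionalMean

variable {Ω E : Type*} [MeasurableSpace Ω] [NormedAddCommGroup E] {μ : Measure Ω} {s : Set Ω}
  {f : Ω → E}

theorem integrable_cond (hf : Integrable f μ) : Integrable f μ[|s] := by
  by_cases hs : μ s = 0
  · simp only [cond_eq_zero_of_meas_eq_zero hs, integrable_zero_measure]
  · exact hf.restrict.smul_measure (ENNReal.inv_ne_top.mpr hs)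

theorem integrable_map_cond {𝓧 : Type*} [MeasurableSpace 𝓧] {X : Ω → 𝓧} {c : 𝓧 → E}
    (hX : Measurable X) (hc : Integrable c (μ.map X)) : Integrable c ((μ[|s]).map X) := by
  have c_aesm : AEStronglyMeasurable c ((μ[|s]).map X) :=
    hc.aestronglyMeasurable.mono_ac (cond_absolutelyContinuous.map hX)
  exact (integrable_map_measure c_aesm hX.aemeasurable).mpr
    (integrable_cond (hc.comp_measurable hX))

variable [NormedSpace ℝ E]

theorem measureReal_smul_integral_cond (hs : μ s ≠ ⊤) :
    μ.real s • ∫ ω, f ω ∂μ[|s] = ∫ ω in s, f ω ∂μ := by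
  rw [ProbabilityTheory.cond, ← setAverage_eq', measure_smul_setAverage f hs]

theorem measureReal_smul_integral_cond_add_compl [IsFiniteMeasure μ] (hs : MeasurableSet s)
    (hf : Integrable f μ) :
    μ.real s • ∫ ω, f ω ∂μ[|s] + μ.real sᶜ • ∫ ω, f ω ∂μ[|sᶜ] = ∫ ω, f ω ∂μ := by
  rw [measureReal_smul_integral_cond (measure_ne_top μ s),
    measureReal_smul_integral_cond (measure_ne_top μ sᶜ), integral_add_compl hs hf]

theorem integral_cond_sub_integral [IsProbabilityMeasure μ] (hs : MeasurableSet s)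
    (hf : Integrable f μ) :
    ∫ ω, f ω ∂μ[|s] - ∫ ω, f ω ∂μ
      = μ.real sᶜ • (∫ ω, f ω ∂μ[|s] - ∫ ω, f ω ∂μ[|sᶜ]) := by
  rw [← measureReal_smul_integral_cond_add_compl hs hf, probReal_compl_eq_one_sub hs]
  module

theorem max_norm_integral_cond_sub_integral [IsProbabilityMeasure μ] (hs : MeasurableSet s)
    (hf : Integrable f μ) :
    max ‖∫ ω, f ω ∂μ[|s] - ∫ ω, f ω ∂μ‖ ‖∫ ω, f ω ∂μ[|sᶜ] - ∫ ω, f ω ∂μ‖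
      = max (μ.real sᶜ) (μ.real s) * ‖∫ ω, f ω ∂μ[|s] - ∫ ω, f ω ∂μ[|sᶜ]‖ := by
  rw [integral_cond_sub_integral hs hf, integral_cond_sub_integral hs.compl hf, compl_compl,
    norm_smul_of_nonneg measureReal_nonneg, norm_smul_of_nonneg measureReal_nonneg,
    norm_sub_rev (∫ ω, f ω ∂μ[|sᶜ]), max_mul_of_nonneg _ _ (norm_nonneg _)]

end ConditionalMean

theorem setOf_eq_zero_eq_compl_setOf_eq_one {Ω : Type*} (B : Ω → Fin 2) :
    {ω | B ω = 0} = {ω | B ω = 1}ᶜ := by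
  ext ω
  simp only [Set.mem_ofPred_eq, Set.mem_compl_iff]
  lia

section Mixture

variable {𝓧 E : Type*} [MeasurableSpace 𝓧] [NormedAddCommGroup E] [NormedSpace ℝ E]
  {P Q P' Q' : Measure 𝓧} {c : 𝓧 → E} {a b α β : ℝ}

theorem integral_ofReal_smul_add_ofReal_smul (ha : 0 ≤ a) (hb : 0 ≤ b)
    (hP : Integrable c P) (hQ : Integrable c Q) :
    ∫ x, c x ∂(ENNReal.ofReal a • P + ENNReal.ofReal b • Q)
      = a • ∫ x, c x ∂P + b • ∫ x, c x ∂Q := by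
  rw [integral_add_measure (hP.smul_measure ENNReal.ofReal_ne_top)
    (hQ.smul_measure ENNReal.ofReal_ne_top), integral_smul_measure, integral_smul_measure,
    ENNReal.toReal_ofReal ha, ENNReal.toReal_ofReal hb]

theorem integral_sub_integral_of_mutual_contamination
    (hα : α ∈ Set.Icc (0 : ℝ) 1) (hβ : β ∈ Set.Icc (0 : ℝ) 1)
    (hP' : P' = ENNReal.ofReal (1 - α) • P + ENNReal.ofReal α • Q)
    (hQ' : Q' = ENNReal.ofReal β • P + ENNReal.ofReal (1 - β) • Q)
    (hP : Integrable c P) (hQ : Integrable c Q) :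
    ∫ x, c x ∂P' - ∫ x, c x ∂Q' = (1 - α - β) • (∫ x, c x ∂P - ∫ x, c x ∂Q) := by
  rw [hP', hQ',
    integral_ofReal_smul_add_ofReal_smul (sub_nonneg.mpr hα.2) hα.1 hP hQ,
    integral_ofReal_smul_add_ofReal_smul hβ.1 (sub_nonneg.mpr hβ.2) hP hQ]
  module

end Mixture

theorem agarwal_constraint_mc_iff_general
    {Ω 𝓧 E : Type*} [MeasurableSpace Ω] [MeasurableSpace 𝓧]
    [NormedAddCommGroup E] [NormedSpace ℝ E] [CompleteSpace E]
    {μ : Measure Ω} [IsProbabilityMeasure μ] {X : Ω → 𝓧} {A Acorr : Ω → Fin 2}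
    (hX : Measurable X) (hA : Measurable A) (hAc : Measurable Acorr)
    {α β : ℝ} (hα : 0 ≤ α) (hβ : 0 ≤ β) (hαβ : α + β < 1)
    (hmix1 : (μ[|{ω | Acorr ω = 1}]).map X
        = ENNReal.ofReal (1 - α) • (μ[|{ω | A ω = 1}]).map X
          + ENNReal.ofReal α • (μ[|{ω | A ω = 0}]).map X)
    (hmix0 : (μ[|{ω | Acorr ω = 0}]).map X
        = ENNReal.ofReal β • (μ[|{ω | A ω = 1}]).map X
          + ENNReal.ofReal (1 - β) • (μ[|{ω | A ω = 0}]).map X)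
    (hbase : max (μ.real {ω | A ω = 0}) (μ.real {ω | A ω = 1})
        = max (μ.real {ω | Acorr ω = 0}) (μ.real {ω | Acorr ω = 1}))
    {c : 𝓧 → E} (hc : Integrable c (μ.map X)) (τ : ℝ) :
    max ‖(∫ ω, c (X ω) ∂μ[|{ω | A ω = 1}]) - ∫ ω, c (X ω) ∂μ‖
        ‖(∫ ω, c (X ω) ∂μ[|{ω | A ω = 0}]) - ∫ ω, c (X ω) ∂μ‖ < τ ↔
      max ‖(∫ ω, c (X ω) ∂μ[|{ω | Acorr ω = 1}]) - ∫ ω, c (X ω) ∂μ‖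
          ‖(∫ ω, c (X ω) ∂μ[|{ω | Acorr ω = 0}]) - ∫ ω, c (X ω) ∂μ‖
        < τ * (1 - α - β) := by
  have c_integrable (s : Set Ω) : Integrable c ((μ[|s]).map X) := integrable_map_cond hX hc
  have hcX : Integrable (fun ω => c (X ω)) μ := hc.comp_measurable hX
  have hA1 : MeasurableSet {ω | A ω = 1} := hA (measurableSet_singleton 1)
  have hAc1 : MeasurableSet {ω | Acorr ω = 1} := hAc (measurableSet_singleton 1)
  have hδ : 0 < 1 - α - β := by linarith
  have gap_corr := integral_sub_integral_of_mutual_contamination ⟨hα, by linarith⟩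
    ⟨hβ, by linarith⟩ hmix1 hmix0 (c_integrable _) (c_integrable _)
  simp only [integral_map hX.aemeasurable (c_integrable _).aestronglyMeasurable,
    setOf_eq_zero_eq_compl_setOf_eq_one] at gap_corr
  simp only [setOf_eq_zero_eq_compl_setOf_eq_one] at hbase ⊢
  rw [max_norm_integral_cond_sub_integral hA1 hcX, max_norm_integral_cond_sub_integral hAc1 hcX,
    gap_corr, ← hbase, norm_smul_of_nonneg hδ.le, mul_left_comm, mul_comm τ,
    mul_lt_mul_iff_right₀ hδ]

/-- Corollary 1, DP case: if the group base rates are preserved under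
corruption, the clean Agarwal-style constraint at tolerance `τ` is equivalent to the
corrupted one at tolerance `τ * (1 - α - β)`. -/
theorem agarwal_constraint_mc_iff
    {Ω 𝓧 : Type*} [MeasurableSpace Ω] [MeasurableSpace 𝓧]
    (μ : Measure Ω) [IsProbabilityMeasure μ]
    (X : Ω → 𝓧) (A Acorr : Ω → Fin 2)
    (hX : Measurable X) (hA : Measurable A) (hAc : Measurable Acorr)
    (α β : ℝ) (hα : α ∈ Set.Ioo (0:ℝ) 1) (hβ : β ∈ Set.Ioo (0:ℝ) 1) (hαβ : α + β < 1)
    (hmix1 : (μ[|{ω | Acorr ω = 1}]).map X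
        = ENNReal.ofReal (1 - α) • (μ[|{ω | A ω = 1}]).map X
          + ENNReal.ofReal α • (μ[|{ω | A ω = 0}]).map X)
    (hmix0 : (μ[|{ω | Acorr ω = 0}]).map X
        = ENNReal.ofReal β • (μ[|{ω | A ω = 1}]).map X
          + ENNReal.ofReal (1 - β) • (μ[|{ω | A ω = 0}]).map X)
    (hbase : max (μ {ω | A ω = 0}).toReal (μ {ω | A ω = 1}).toReal
        = max (μ {ω | Acorr ω = 0}).toReal (μ {ω | Acorr ω = 1}).toReal)
    (c : 𝓧 → ℝ) (hc : Measurable c) (C : ℝ) (hbound : ∀ x, |c x| ≤ C)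
    (τ : ℝ) (hτ : 0 < τ) :
    max |(∫ ω, c (X ω) ∂μ[|{ω | A ω = 1}]) - ∫ ω, c (X ω) ∂μ|
        |(∫ ω, c (X ω) ∂μ[|{ω | A ω = 0}]) - ∫ ω, c (X ω) ∂μ| < τ ↔
      max |(∫ ω, c (X ω) ∂μ[|{ω | Acorr ω = 1}]) - ∫ ω, c (X ω) ∂μ|
          |(∫ ω, c (X ω) ∂μ[|{ω | Acorr ω = 0}]) - ∫ ω, c (X ω) ∂μ|
        < τ * (1 - α - β) :=
  agarwal_constraint_mc_iff_general hX hA hAc hα.1.le hβ.1.le hαβ hmix1 hmix0 hbase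
    (.of_bound hc.aestronglyMeasurable C (.of_forall hbound)) τ
end
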